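/- arXiv:2605.02017 — 2 statements merged into one kernel-verified Lean document; each statement's English description precedes it below -/
import Mathlib

section
/- For every alternating Büchi automaton A over Σ and every Boolean variable p ∈ Σ, the language of the existential quantification is contained in the language of the state-wise existential quantification: L(∃p.A) ⊆ L(∃°p.A). -/
/-!
Let `ρ` be an accepting run of `A` on `t`. Deleting from `ρ` every node labeled with a
`p`-literal, together with its subtree, gives a run of `∃°p.A` on the projection of `t`.
The deleted children of a node at depth `i` are `p`-literals that hold in `t i`, so each of
them becomes `tt` under the substitution of the truth value of `p` in `t i`. Hence the
remaining children satisfy one of the two disjuncts of the new transition formula. The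
remaining literals are not about `p`, so they still hold in the projected letters, and
the pruned tree has no infinite branches beyond those of `ρ`, so acceptance is inherited.
-/

namespace ABAKC

/-- Positive Boolean formulas over variable type `α` (no negation). -/
inductive PosBool (α : Type) : Type
  | tt : PosBool α
  | ff : PosBool α
  | var : α → PosBool α
  | and : PosBool α → PosBool α → PosBool α
  | or : PosBool α → PosBool α → PosBool α

namespace PosBool

variable {α β : Type}

/-- Satisfaction of a positive Boolean formula by a set of variables. -/
def eval : PosBool α → Set α → Prop
  | .tt, _ => True
  | .ff, _ => False
  | .var a, X => a ∈ X
  | .and f g, X => f.eval X ∧ g.eval X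
  | .or f g, X => f.eval X ∨ g.eval X

/-- The minimal satisfying assignments of a positive Boolean formula. -/
def mSat (B : PosBool α) : Set (Set α) :=
  {X | B.eval X ∧ ∀ Y : Set α, Y ⊂ X → ¬ B.eval Y}

/-- Substitution of formulas for variables. -/
def bind : PosBool α → (α → PosBool β) → PosBool β
  | .tt, _ => .tt
  | .ff, _ => .ff
  | .var a, f => f a
  | .and g h, f => .and (g.bind f) (h.bind f)
  | .or g h, f => .or (g.bind f) (h.bind f)

end PosBool

/-- Finite disjunction. -/
def bigOr {α : Type} : List (PosBool α) → PosBool α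
  | [] => .ff
  | b :: l => .or b (bigOr l)

/-- Finite conjunction. -/
def bigAnd {α : Type} : List (PosBool α) → PosBool α
  | [] => .tt
  | b :: l => .and b (bigAnd l)

/-- Literals over the Boolean variables `V`: `(a, true)` is `a` and `(a, false)` is `¬a`. -/
abbrev Lit (V : Type) := V × Bool

/-- Infinite words over the alphabet `2^V`. -/
abbrev Word (V : Type) := ℕ → Set V

/-- An alternating Büchi automaton over Boolean variables `V` with state set `Q`:
transition formulas are positive Boolean formulas over states and literals. -/
structure ABA (V : Type) (Q : Type) where
  init : Q
  tr : Q → PosBool (Q ⊕ Lit V)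
  acc : Set Q

variable {V Q : Type}

/-- A literal holds in a letter `σ ⊆ V`. -/
def litHolds (σ : Set V) (l : Lit V) : Prop := l.1 ∈ σ ↔ l.2 = true

/-- A run of an alternating automaton on a word: a `(Q ⊕ Lit V)`-labeled tree whose root
is labeled with the initial state, such that the children labels of every state-labeled
node satisfy the state's transition formula, and literal labels are consistent with the word. -/
structure Run (A : ABA V Q) (w : Word V) where
  nodes : Set (List ℕ)
  label : List ℕ → Q ⊕ Lit V
  root_mem : [] ∈ nodes
  prefix_closed : ∀ {m n : List ℕ}, n ∈ nodes → m <+: n → m ∈ nodes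
  root_label : label [] = Sum.inl A.init
  step : ∀ n ∈ nodes, ∀ q : Q, label n = Sum.inl q →
    (A.tr q).eval {x | ∃ d : ℕ, n ++ [d] ∈ nodes ∧ label (n ++ [d]) = x}
  lit_ok : ∀ n ∈ nodes, ∀ l : Lit V, label n = Sum.inr l → litHolds (w (n.length - 1)) l

/-- A run is accepting if every infinite branch visits the acceptance set infinitely often. -/
def Run.Accepting {A : ABA V Q} {w : Word V} (ρ : Run A w) : Prop :=
  ∀ b : ℕ → ℕ, (∀ k : ℕ, (List.ofFn fun i : Fin k => b i) ∈ ρ.nodes) →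
    ∀ k : ℕ, ∃ j : ℕ, k ≤ j ∧ ∃ q ∈ A.acc,
      ρ.label (List.ofFn fun i : Fin j => b i) = Sum.inl q

/-- The language of an alternating Büchi automaton. -/
def ABA.lang (A : ABA V Q) : Set (Word V) := {w | ∃ ρ : Run A w, ρ.Accepting}

/-- A safety automaton: every state is accepting. -/
def ABA.Safety (A : ABA V Q) : Prop := A.acc = Set.univ

/-- Projection of a word onto `Σ ∖ {p}`. -/
def projWord (p : V) (t : Word V) : Word V := fun i => t i \ {p}

/-- The language of the automaton viewed over the alphabet `Σ ∖ {p}`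
(words never containing `p`). -/
def ABA.langWithout (A : ABA V Q) (p : V) : Set (Word V) :=
  {w | w ∈ A.lang ∧ ∀ i : ℕ, p ∉ w i}

/-- The existential quantification `∃p.A`: projections onto `Σ ∖ {p}` of words in `L(A)`. -/
def ABA.existsLang (A : ABA V Q) (p : V) : Set (Word V) :=
  {w | ∃ t ∈ A.lang, projWord p t = w}

/-- The universal quantification `∀p.A`: words over `Σ ∖ {p}` all of whose `p`-extensions
are in `L(A)`. -/
def ABA.forallLang (A : ABA V Q) (p : V) : Set (Word V) :=
  {w | (∀ i : ℕ, p ∉ w i) ∧ ∀ t : Word V, projWord p t = w → t ∈ A.lang}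

/-- Substitute the Boolean value `b` for the variable `p` in all `p`-literals of a
transition formula. -/
def substP [DecidableEq V] (p : V) (b : Bool) (B : PosBool (Q ⊕ Lit V)) :
    PosBool (Q ⊕ Lit V) :=
  B.bind fun x =>
    match x with
    | Sum.inl q => PosBool.var (Sum.inl q)
    | Sum.inr (a, c) =>
        if a = p then (if c = b then PosBool.tt else PosBool.ff)
        else PosBool.var (Sum.inr (a, c))

/-- State-wise existential quantification `∃°p.A`: replace each `δ(q)` by
`δ(q)[p↦1] ∨ δ(q)[p↦0]`. -/
def ABA.sExists [DecidableEq V] (A : ABA V Q) (p : V) : ABA V Q :=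
  { A with tr := fun q => PosBool.or (substP p true (A.tr q)) (substP p false (A.tr q)) }

/-- State-wise universal quantification `∀°p.A`: replace each `δ(q)` by
`δ(q)[p↦1] ∧ δ(q)[p↦0]`. -/
def ABA.sForall [DecidableEq V] (A : ABA V Q) (p : V) : ABA V Q :=
  { A with tr := fun q => PosBool.and (substP p true (A.tr q)) (substP p false (A.tr q)) }

/-- `A` is in existential normal form for `p`: the language of the state-wise existential
quantification (over the alphabet `Σ ∖ {p}`) equals the language of `∃p.A`. -/
def ExistentialNF [DecidableEq V] (A : ABA V Q) (p : V) : Prop :=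
  (A.sExists p).langWithout p = A.existsLang p

/-- `A` is in universal normal form for `p`: the language of the state-wise universal
quantification (over the alphabet `Σ ∖ {p}`) equals the language of `∀p.A`. -/
def UniversalNF [DecidableEq V] (A : ABA V Q) (p : V) : Prop :=
  (A.sForall p).langWithout p = A.forallLang p

/-- Projection of a transition formula to the states (literals replaced by `true`). -/
def projQ (B : PosBool (Q ⊕ Lit V)) : PosBool Q :=
  B.bind fun x =>
    match x with
    | Sum.inl q => PosBool.var q
    | Sum.inr _ => PosBool.tt

/-- A positive Boolean formula over states is (semantically) a disjunction of states. -/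
def IsDisjOfStates (B : PosBool Q) : Prop :=
  ∃ S : Set Q, ∀ X : Set Q, B.eval X ↔ ∃ q ∈ S, q ∈ X

/-- A positive Boolean formula over states is (semantically) a conjunction of states. -/
def IsConjOfStates (B : PosBool Q) : Prop :=
  ∃ S : Set Q, ∀ X : Set Q, B.eval X ↔ ∀ q ∈ S, q ∈ X

/-- `A` is nondeterministic: each transition formula, projected to the states,
is a disjunction of states. -/
def ABA.Nondet (A : ABA V Q) : Prop := ∀ q : Q, IsDisjOfStates (projQ (A.tr q))

/-- `A` is universal: each transition formula, projected to the states,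
is a conjunction of states. -/
def ABA.Universal (A : ABA V Q) : Prop := ∀ q : Q, IsConjOfStates (projQ (A.tr q))

/-- `A` is deterministic: both nondeterministic and universal. -/
def ABA.Deterministic (A : ABA V Q) : Prop := A.Nondet ∧ A.Universal

/-- Vertices of unfoldings: states or literals, paired with a timestep. -/
abbrev UVert (V Q : Type) := (Q ⊕ Lit V) × ℕ

/-- An existential unfolding of `A`: a DAG over `(Q ∪ L_Σ) × ℕ` rooted at `(q0, 0)`,
where every state vertex `(q, i)` has as successor set exactly `X × {i+1}` for one
chosen minimal satisfying assignment `X` of `δ(q)`, and every vertex is reachable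
from the root (smallest-sets condition). -/
structure ExUnfolding (A : ABA V Q) where
  verts : Set (UVert V Q)
  edges : Set (UVert V Q × UVert V Q)
  root_mem : (Sum.inl A.init, 0) ∈ verts
  edges_sub : ∀ e ∈ edges, e.1 ∈ verts ∧ e.2 ∈ verts
  edge_shape : ∀ e ∈ edges, (∃ q : Q, e.1.1 = Sum.inl q) ∧ e.2.2 = e.1.2 + 1
  succ : ∀ q : Q, ∀ i : ℕ, (Sum.inl q, i) ∈ verts →
    ∃ X ∈ (A.tr q).mSat,
      (∀ x ∈ X, (x, i + 1) ∈ verts ∧ ((Sum.inl q, i), (x, i + 1)) ∈ edges) ∧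
      (∀ u : UVert V Q, ((Sum.inl q, i), u) ∈ edges → u.2 = i + 1 ∧ u.1 ∈ X)
  minimal : ∀ v ∈ verts,
    Relation.ReflTransGen (fun a b => (a, b) ∈ edges) (Sum.inl A.init, 0) v

/-- Edge relation of an existential unfolding. -/
def ExUnfolding.edgeRel {A : ABA V Q} (U : ExUnfolding A) (a b : UVert V Q) : Prop :=
  (a, b) ∈ U.edges

/-- The existential syntactic condition for `p`: no existential unfolding contains both
`(p, i)` and `(¬p, i)` for any timestep `i`. -/
def ExSyntacticCond (A : ABA V Q) (p : V) : Prop :=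
  ∀ U : ExUnfolding A, ∀ i : ℕ,
    ¬ ((Sum.inr (p, true), i) ∈ U.verts ∧ (Sum.inr (p, false), i) ∈ U.verts)

/-- `X` covers the transition formula `B`: for every minimal satisfying assignment `X'`
of `B`, `X ∩ X' ∩ Q ≠ ∅` and `X' ∩ L_Σ ⊆ X`. -/
def Covers (B : PosBool (Q ⊕ Lit V)) (X : Set (Q ⊕ Lit V)) : Prop :=
  ∀ X' ∈ B.mSat,
    (∃ s : Q, Sum.inl s ∈ X ∧ Sum.inl s ∈ X') ∧
    ∀ l : Lit V, Sum.inr l ∈ X' → Sum.inr l ∈ X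

/-- A minimal covering set. -/
def MinCover (B : PosBool (Q ⊕ Lit V)) (X : Set (Q ⊕ Lit V)) : Prop :=
  Covers B X ∧ ∀ Y : Set (Q ⊕ Lit V), Y ⊂ X → ¬ Covers B Y

/-- A universal unfolding of `A`: a DAG over `(Q ∪ L_Σ) × ℕ` rooted at `(q0, 0)`,
where every state vertex `(q, i)` has as successor set exactly `X × {i+1}` for some
minimal set `X` that intersects every minimal satisfying assignment of `δ(q)` in a state
and contains all its literals, and every vertex is reachable from the root. -/
structure UnivUnfolding (A : ABA V Q) where
  verts : Set (UVert V Q)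
  edges : Set (UVert V Q × UVert V Q)
  root_mem : (Sum.inl A.init, 0) ∈ verts
  edges_sub : ∀ e ∈ edges, e.1 ∈ verts ∧ e.2 ∈ verts
  edge_shape : ∀ e ∈ edges, (∃ q : Q, e.1.1 = Sum.inl q) ∧ e.2.2 = e.1.2 + 1
  succ : ∀ q : Q, ∀ i : ℕ, (Sum.inl q, i) ∈ verts →
    ∃ X : Set (Q ⊕ Lit V), MinCover (A.tr q) X ∧
      (∀ x ∈ X, (x, i + 1) ∈ verts ∧ ((Sum.inl q, i), (x, i + 1)) ∈ edges) ∧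
      (∀ u : UVert V Q, ((Sum.inl q, i), u) ∈ edges → u.2 = i + 1 ∧ u.1 ∈ X)
  minimal : ∀ v ∈ verts,
    Relation.ReflTransGen (fun a b => (a, b) ∈ edges) (Sum.inl A.init, 0) v

/-- Edge relation of a universal unfolding. -/
def UnivUnfolding.edgeRel {A : ABA V Q} (U : UnivUnfolding A) (a b : UVert V Q) : Prop :=
  (a, b) ∈ U.edges

/-- The universal syntactic condition for `p`: no universal unfolding contains both
`(p, i)` and `(¬p, i)` for any timestep `i`. -/
def UnivSyntacticCond (A : ABA V Q) (p : V) : Prop :=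
  ∀ U : UnivUnfolding A, ∀ i : ℕ,
    ¬ ((Sum.inr (p, true), i) ∈ U.verts ∧ (Sum.inr (p, false), i) ∈ U.verts)

/-- `q` and `q'` are existentially in conflict for `p`. -/
def ExConflict (A : ABA V Q) (p : V) (q q' : Q) : Prop :=
  ∃ U : ExUnfolding A, ∃ i : ℕ,
    (Sum.inl q, i) ∈ U.verts ∧ (Sum.inl q', i) ∈ U.verts ∧
    ∃ i' : ℕ,
      Relation.ReflTransGen U.edgeRel (Sum.inl q, i) (Sum.inr (p, true), i') ∧
      Relation.ReflTransGen U.edgeRel (Sum.inl q', i) (Sum.inr (p, false), i')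

/-- `q` and `q'` are universally in conflict for `p`. -/
def UnivConflict (A : ABA V Q) (p : V) (q q' : Q) : Prop :=
  ∃ U : UnivUnfolding A, ∃ i : ℕ,
    (Sum.inl q, i) ∈ U.verts ∧ (Sum.inl q', i) ∈ U.verts ∧
    ∃ i' : ℕ,
      Relation.ReflTransGen U.edgeRel (Sum.inl q, i) (Sum.inr (p, true), i') ∧
      Relation.ReflTransGen U.edgeRel (Sum.inl q', i) (Sum.inr (p, false), i')

end ABAKC
namespace ABAKC

variable {V Q : Type}

/-! ### Conflict-detection automata -/

/-- Transition relation of the nondeterministic safety automaton deciding existential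
conflict of `q` and `q'`: from `(q1, q2, b)` to `(q1', q2', b')` whenever
`b' = b ∨ (q1 = q ∧ q2 = q')` and there is a set `X` containing `q1'` and `q2'` that is a
minimal satisfying assignment of both `δ(q1)` and `δ(q2)`. -/
def exConfStep (A : ABA V Q) (q q' : Q) (s s' : Q × Q × Bool) : Prop :=
  (s'.2.2 = true ↔ (s.2.2 = true ∨ (s.1 = q ∧ s.2.1 = q'))) ∧
  ∃ X : Set (Q ⊕ Lit V), Sum.inl s'.1 ∈ X ∧ Sum.inl s'.2.1 ∈ X ∧
    X ∈ (A.tr s.1).mSat ∧ X ∈ (A.tr s.2.1).mSat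

/-- Nonemptiness of the existential-conflict automaton: some finite run from
`(q0, q0, false)` reaches, with flag `true`, an accepting target `(p, ¬p, true)` or
`(¬p, p, true)`, i.e., a common minimal satisfying assignment containing both
`p`-literals. -/
def exConfAutNonempty (A : ABA V Q) (q q' : Q) (p : V) : Prop :=
  ∃ (n : ℕ) (σ : ℕ → Q × Q × Bool),
    σ 0 = (A.init, A.init, false) ∧
    (∀ k < n, exConfStep A q q' (σ k) (σ (k + 1))) ∧
    ((σ n).2.2 = true ∨ ((σ n).1 = q ∧ (σ n).2.1 = q')) ∧
    ∃ X : Set (Q ⊕ Lit V),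
      X ∈ (A.tr (σ n).1).mSat ∧ X ∈ (A.tr (σ n).2.1).mSat ∧
      Sum.inr (p, true) ∈ X ∧ Sum.inr (p, false) ∈ X

/-- Transition relation of the nondeterministic safety automaton deciding universal
conflict of `q` and `q'`: as in the existential case, but `q1'` and `q2'` may come from
two different minimal satisfying assignments `X` and `X'`. -/
def univConfStep (A : ABA V Q) (q q' : Q) (s s' : Q × Q × Bool) : Prop :=
  (s'.2.2 = true ↔ (s.2.2 = true ∨ (s.1 = q ∧ s.2.1 = q'))) ∧
  ∃ X X' : Set (Q ⊕ Lit V), Sum.inl s'.1 ∈ X ∧ Sum.inl s'.2.1 ∈ X' ∧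
    X ∈ (A.tr s.1).mSat ∧ X' ∈ (A.tr s.2.1).mSat

/-- Nonemptiness of the universal-conflict automaton. -/
def univConfAutNonempty (A : ABA V Q) (q q' : Q) (p : V) : Prop :=
  ∃ (n : ℕ) (σ : ℕ → Q × Q × Bool),
    σ 0 = (A.init, A.init, false) ∧
    (∀ k < n, univConfStep A q q' (σ k) (σ (k + 1))) ∧
    ((σ n).2.2 = true ∨ ((σ n).1 = q ∧ (σ n).2.1 = q')) ∧
    ∃ X X' : Set (Q ⊕ Lit V),
      X ∈ (A.tr (σ n).1).mSat ∧ X' ∈ (A.tr (σ n).2.1).mSat ∧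
      ((Sum.inr (p, true) ∈ X ∧ Sum.inr (p, false) ∈ X') ∨
       (Sum.inr (p, false) ∈ X ∧ Sum.inr (p, true) ∈ X'))

/-! ### Compilation constructions -/

/-- Macro-states: subsets of the conflict set `M`. -/
abbrev MacroState [DecidableEq Q] (M : Finset Q) := {X : Finset Q // X ⊆ M}

/-- State space of the compiled automata: `2^M ∪ (Q ∖ M)`. -/
abbrev CompState [DecidableEq Q] (M : Finset Q) := MacroState M ⊕ {a : Q // a ∉ M}

/-- The substitution `δ(q)[X'↦1, M∖X'↦0]`, re-targeting the remaining state variables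
(which lie outside `M`) to the compiled state space. -/
def compSubst [DecidableEq Q] (M X' : Finset Q) (B : PosBool (Q ⊕ Lit V)) :
    PosBool (CompState M ⊕ Lit V) :=
  B.bind fun x =>
    match x with
    | Sum.inl s =>
        if s ∈ X' then PosBool.tt
        else if h : s ∈ M then PosBool.ff
        else PosBool.var (Sum.inl (Sum.inr ⟨s, h⟩))
    | Sum.inr l => PosBool.var (Sum.inr l)

/-- The macro-state variable corresponding to `X' ⊆ M`. -/
def macroVar [DecidableEq Q] (M : Finset Q) (X' : {Y : Finset Q // Y ∈ M.powerset}) :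
    PosBool (CompState M ⊕ Lit V) :=
  PosBool.var (Sum.inl (Sum.inl ⟨X'.1, Finset.mem_powerset.mp X'.2⟩))

/-- The existential compilation of `A` with respect to `M ⊆ Q`: a safety automaton with
states `2^M ∪ (Q∖M)`, `δ'(q) = ⋁_{X'⊆M} (X' ∧ δ(q)[X'↦1, M∖X'↦0])` for `q ∈ Q∖M`, and
`δ'(X) = ⋁_{X'⊆M} (X' ∧ ⋀_{q∈X} δ(q)[X'↦1, M∖X'↦0])` for macro-states `X ⊆ M`. -/
noncomputable def exCompile [DecidableEq Q] (A : ABA V Q) (M : Finset Q) : ABA V (CompState M) where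
  init :=
    if h : A.init ∈ M then Sum.inl ⟨{A.init}, Finset.singleton_subset_iff.mpr h⟩
    else Sum.inr ⟨A.init, h⟩
  tr := fun s =>
    bigOr (M.powerset.attach.toList.map fun X' =>
      PosBool.and (macroVar M X')
        (match s with
          | Sum.inr a => compSubst M X'.1 (A.tr a.1)
          | Sum.inl X => bigAnd (X.1.toList.map fun b => compSubst M X'.1 (A.tr b))))
  acc := Set.univ

/-- The universal compilation of `A` with respect to `M ⊆ Q`: a safety automaton with
states `2^M ∪ (Q∖M)`, `δ'(q) = ⋀_{X'⊆M} (X' ∧ δ(q)[X'↦1, M∖X'↦0])` for `q ∈ Q∖M`, and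
`δ'(X) = ⋀_{X'⊆M} (X' ∧ ⋁_{q∈X} δ(q)[X'↦1, M∖X'↦0])` for macro-states `X ⊆ M`. -/
noncomputable def univCompile [DecidableEq Q] (A : ABA V Q) (M : Finset Q) : ABA V (CompState M) where
  init :=
    if h : A.init ∈ M then Sum.inl ⟨{A.init}, Finset.singleton_subset_iff.mpr h⟩
    else Sum.inr ⟨A.init, h⟩
  tr := fun s =>
    bigAnd (M.powerset.attach.toList.map fun X' =>
      PosBool.and (macroVar M X')
        (match s with
          | Sum.inr a => compSubst M X'.1 (A.tr a.1)
          | Sum.inl X => bigOr (X.1.toList.map fun b => compSubst M X'.1 (A.tr b))))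
  acc := Set.univ

/-- `M` over-approximates the states existentially in conflict for `p`:
every state in an existential conflict lies in `M`. -/
def ExOverApprox (A : ABA V Q) (p : V) (M : Finset Q) : Prop :=
  ∀ q q' : Q, ExConflict A p q q' → q ∈ M ∧ q' ∈ M

/-- `M` over-approximates the states universally in conflict for `p`. -/
def UnivOverApprox (A : ABA V Q) (p : V) (M : Finset Q) : Prop :=
  ∀ q q' : Q, UnivConflict A p q q' → q ∈ M ∧ q' ∈ M

/-- A run whose state-labeled nodes have children labels forming a *minimal* satisfying
assignment of the transition formula. -/
structure MinRun (A : ABA V Q) (w : Word V) extends Run A w where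
  min_step : ∀ n ∈ nodes, ∀ q : Q, label n = Sum.inl q →
    {x | ∃ d : ℕ, n ++ [d] ∈ nodes ∧ label (n ++ [d]) = x} ∈ (A.tr q).mSat

/-! ### Fixpoint labelings -/

/-- `post(q)`: the state parts of the minimal satisfying assignments of `δ(q)`. -/
def statePost (A : ABA V Q) (q : Q) : Set (Set Q) :=
  {Y | ∃ X ∈ (A.tr q).mSat, Y = {s : Q | Sum.inl s ∈ X}}

/-- The `p`-literals appearing in some minimal satisfying assignment of `δ(q)`,
i.e., `l(q) ∩ L_{p}`. -/
def pLits (A : ABA V Q) (p : V) (q : Q) : Set (Lit V) :=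
  {l | l.1 = p ∧ ∃ X ∈ (A.tr q).mSat, Sum.inr l ∈ X}

/-- One step of the successor relation on states induced by `post`. -/
def stepRel (A : ABA V Q) (a b : Q) : Prop := ∃ X ∈ statePost A a, b ∈ X

/-- Reachability between states along `post`. -/
def stateReach (A : ABA V Q) (a b : Q) : Prop := Relation.ReflTransGen (stepRel A) a b

/-- The labeling of the existential conflict fixpoint algorithm:
`l[q,0] = { l(q) ∩ L_{p} }` and
`l[q,i] = ⋃_{X ∈ post(q)} { ⋃_{q'∈X} ⋃_{u ∈ l[q',i−1]} u }`. -/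
def exLabel (A : ABA V Q) (p : V) : ℕ → Q → Set (Set (Lit V))
  | 0, q => {pLits A p q}
  | i + 1, q => {S | ∃ X ∈ statePost A q, S = ⋃ q' ∈ X, ⋃ u ∈ exLabel A p i q', u}

/-- The labeling of the universal conflict fixpoint algorithm:
`l[q,0] = { l(q) ∩ L_{p} }` and
`l[q,i] = { ⋃_{X ∈ post(q)} ⋃_{q'∈X} ⋃_{u ∈ l[q',i−1]} u }`. -/
def univLabel (A : ABA V Q) (p : V) : ℕ → Q → Set (Set (Lit V))
  | 0, q => {pLits A p q}
  | i + 1, q => {⋃ X ∈ statePost A q, ⋃ q' ∈ X, ⋃ u ∈ univLabel A p i q', u}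

/-- The conflict set returned by the existential fixpoint algorithm: all states added
(at some iteration) because two conjunctive successors `q', q''` in a common
`X ∈ post(q)` carried different labels, together with everything they reach. -/
def exConfs (A : ABA V Q) (p : V) : Set Q :=
  {s | ∃ i : ℕ, ∃ q : Q, ∃ X ∈ statePost A q, ∃ q' ∈ X, ∃ q'' ∈ X,
    exLabel A p i q' ≠ exLabel A p i q'' ∧
    (s = q' ∨ s = q'' ∨ stateReach A q' s ∨ stateReach A q'' s)}

/-- The conflict set returned by the universal fixpoint algorithm: all states added
(at some iteration) because two disjunctive successors `q' ∈ X`, `q'' ∈ X'` of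
distinct `X, X' ∈ post(q)` carried different labels, together with everything they
reach. -/
def univConfs (A : ABA V Q) (p : V) : Set Q :=
  {s | ∃ i : ℕ, ∃ q : Q, ∃ X ∈ statePost A q, ∃ X' ∈ statePost A q,
    ∃ q' ∈ X, ∃ q'' ∈ X',
    univLabel A p i q' ≠ univLabel A p i q'' ∧
    (s = q' ∨ s = q'' ∨ stateReach A q' s ∨ stateReach A q'' s)}

end ABAKC

namespace ABAKC

/-- `x` is one of the literals `p`, `¬p`. -/
def IsPLit {V Q : Type} (p : V) (x : Q ⊕ Lit V) : Prop := ∃ c : Bool, x = Sum.inr (p, c)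

/-- If every `p`-literal of `X` agrees with the value `b`, then substituting `b` for `p`
makes the `p`-literals of `X` redundant. -/
theorem eval_substP {V Q : Type} [DecidableEq V] (p : V) (b : Bool)
    (X Y : Set (Q ⊕ Lit V)) (hb : ∀ c : Bool, Sum.inr (p, c) ∈ X → c = b)
    (hY : ∀ x ∈ X, ¬ IsPLit p x → x ∈ Y) (B : PosBool (Q ⊕ Lit V)) (h : B.eval X) :
    (substP p b B).eval Y := by
  induction B with
  | tt => trivial
  | ff => exact h
  | var x =>
    rcases x with q | ⟨a, c⟩
    · exact hY _ h (by rintro ⟨c, hc⟩; cases hc)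
    · by_cases ha : a = p
      · subst ha
        have hc := hb c h
        simp [substP, PosBool.bind, hc, PosBool.eval]
      · have : (Sum.inr (a, c) : Q ⊕ Lit V) ∈ Y :=
          hY _ h (by rintro ⟨c', hc⟩; cases hc; exact ha rfl)
        simpa [substP, PosBool.bind, ha, PosBool.eval] using this
  | and f g hf hg => exact ⟨hf h.1, hg h.2⟩
  | or f g hf hg => exact h.imp hf hg

/-- The run of `∃°p.A` on the projected word obtained by cutting off all nodes labeled with
`p`-literals, together with their descendants. -/
def Run.prune {V Q : Type} [DecidableEq V] {A : ABA V Q} {t : Word V} (p : V)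
    (ρ : Run A t) : Run (A.sExists p) (projWord p t) where
  nodes := {n | n ∈ ρ.nodes ∧ ∀ m, m <+: n → ¬ IsPLit p (ρ.label m)}
  label := ρ.label
  root_mem := by
    refine ⟨ρ.root_mem, fun m hm => ?_⟩
    rw [List.prefix_nil.mp hm, ρ.root_label]
    rintro ⟨c, hc⟩
    cases hc
  prefix_closed := fun hn hm =>
    ⟨ρ.prefix_closed hn.1 hm, fun k hk => hn.2 k (hk.trans hm)⟩
  root_label := ρ.root_label
  step := by
    classical
    intro n hn q hq
    have key := eval_substP p (decide (p ∈ t n.length))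
      {x | ∃ d : ℕ, n ++ [d] ∈ ρ.nodes ∧ ρ.label (n ++ [d]) = x}
      {x | ∃ d : ℕ, (n ++ [d] ∈ ρ.nodes ∧ ∀ m, m <+: n ++ [d] → ¬ IsPLit p (ρ.label m)) ∧
        ρ.label (n ++ [d]) = x}
      (by
        rintro c ⟨d, hd, hl⟩
        have h := ρ.lit_ok _ hd _ hl
        simp only [litHolds, List.length_append, List.length_singleton,
          Nat.add_sub_cancel] at h
        cases c <;> simp_all)
      (by
        rintro x ⟨d, hd, rfl⟩ hx
        refine ⟨d, ⟨hd, fun m hm => ?_⟩, rfl⟩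
        rcases List.prefix_concat_iff.mp hm with rfl | hm
        · exact hx
        · exact hn.2 m hm)
      (A.tr q) (ρ.step n hn.1 q hq)
    cases hdec : decide (p ∈ t n.length) with
    | true => rw [hdec] at key; exact Or.inl key
    | false => rw [hdec] at key; exact Or.inr key
  lit_ok := by
    rintro n hn ⟨a, c⟩ hl
    have h := ρ.lit_ok n hn.1 _ hl
    have ha : a ≠ p := by
      rintro rfl
      exact hn.2 n List.prefix_rfl ⟨c, hl⟩
    simpa [litHolds, projWord, ha] using h

/-- For every alternating Büchi automaton `A` and `p ∈ Σ`,
`L(∃p.A) ⊆ L(∃°p.A)`. -/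
theorem existsLang_subset_sExists {V Q : Type} [Fintype V] [Fintype Q] [DecidableEq V]
    (A : ABA V Q) (p : V) :
    A.existsLang p ⊆ (A.sExists p).langWithout p := by
  rintro _ ⟨t, ⟨ρ, hρ⟩, rfl⟩
  exact ⟨⟨ρ.prune p, fun b hb => hρ b fun k => (hb k).1⟩, fun i h => h.2 rfl⟩

end ABAKC
end

section
/- For every alternating Büchi automaton A over Σ and every Boolean variable p ∈ Σ, the language of the state-wise universal quantification is contained in the language of the universal quantification: L(∀°p.A) ⊆ L(∀p.A). -/
namespace ABAKC

variable {V Q : Type}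

/-- If `S` satisfies `δ[p↦b]`, then `δ` is satisfied by every set that contains the literal of `p`
with value `b` and all elements of `S` other than `p`-literals. -/
lemma eval_of_eval_substP [DecidableEq V] (p : V) (b : Bool) (B : PosBool (Q ⊕ Lit V))
    {S T : Set (Q ⊕ Lit V)} (hq : ∀ q : Q, Sum.inl q ∈ S → Sum.inl q ∈ T)
    (hl : ∀ l : Lit V, l.1 ≠ p → Sum.inr l ∈ S → Sum.inr l ∈ T)
    (hp : Sum.inr (p, b) ∈ T) (h : (substP p b B).eval S) : B.eval T := by
  induction B with
  | tt => trivial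
  | ff => exact h
  | var x =>
    rcases x with q | ⟨a, c⟩
    · exact hq q h
    · simp only [substP, PosBool.bind] at h
      split_ifs at h with h1 h2
      · subst h1 h2
        exact hp
      · exact h.elim
      · exact hl (a, c) h1 h
  | and f g ihf ihg => exact ⟨ihf h.1, ihg h.2⟩
  | or f g ihf ihg => exact h.imp ihf ihg

/-- The `p`-literal that is true in the letter `σ`. -/
noncomputable def trueLit (p : V) (σ : Set V) : Lit V :=
  open Classical in (p, decide (p ∈ σ))

lemma litHolds_trueLit (p : V) (σ : Set V) : litHolds σ (trueLit p σ) := by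
  simp [litHolds, trueLit]

/-- Replace every `p`-literal by the one that is true in `σ`. -/
noncomputable def fixLit [DecidableEq V] (p : V) (σ : Set V) : Q ⊕ Lit V → Q ⊕ Lit V
  | Sum.inl q => Sum.inl q
  | Sum.inr l => Sum.inr (if l.1 = p then trueLit p σ else l)

/-- The nodes of the shifted tree: `m` becomes `m.map (· + 1)`, and each such node receives
a fresh child in direction `0`. -/
def shiftNodes (N : Set (List ℕ)) : Set (List ℕ) :=
  {n | ∃ m ∈ N, n = m.map (· + 1) ∨ n = m.map (· + 1) ++ [0]}

/-- The labeling of the shifted tree over the word `t`: fresh leaves carry the `p`-literal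
that is true at their timestep, and so do the `p`-literal nodes of the original tree. -/
noncomputable def shiftLabel [DecidableEq V] (p : V) (t : Word V) (lab : List ℕ → Q ⊕ Lit V)
    (n : List ℕ) : Q ⊕ Lit V :=
  if 0 ∈ n then Sum.inr (trueLit p (t (n.length - 1)))
  else fixLit p (t (n.length - 1)) (lab (n.map (· - 1)))

lemma shiftLabel_map [DecidableEq V] (p : V) (t : Word V) (lab : List ℕ → Q ⊕ Lit V)
    (m : List ℕ) : shiftLabel p t lab (m.map (· + 1)) = fixLit p (t (m.length - 1)) (lab m) := by
  simp [shiftLabel, Function.comp_def]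

lemma shiftLabel_snoc [DecidableEq V] (p : V) (t : Word V) (lab : List ℕ → Q ⊕ Lit V)
    (m : List ℕ) :
    shiftLabel p t lab (m.map (· + 1) ++ [0]) = Sum.inr (trueLit p (t m.length)) := by
  simp [shiftLabel]

lemma fixLit_eq_inl [DecidableEq V] {p : V} {σ : Set V} {x : Q ⊕ Lit V} {q : Q}
    (h : fixLit p σ x = Sum.inl q) : x = Sum.inl q := by
  cases x <;> simp_all [fixLit]

/-- Literals of variables other than `p` do not see the projection away from `p`. -/
lemma litHolds_diff {p : V} {σ : Set V} {l : Lit V} (hl : l.1 ≠ p) :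
    litHolds (σ \ {p}) l ↔ litHolds σ l := by
  simp [litHolds, hl]

/-- The run of `A` on `t` obtained by shifting a run of `∀°p.A` on the projection of `t`. -/
noncomputable def shiftRun [DecidableEq V] {A : ABA V Q} {p : V} {t : Word V}
    (ρ : Run (A.sForall p) (projWord p t)) : Run A t where
  nodes := shiftNodes ρ.nodes
  label := shiftLabel p t ρ.label
  root_mem := ⟨[], ρ.root_mem, Or.inl rfl⟩
  prefix_closed := by
    have key : ∀ m ∈ ρ.nodes, ∀ k : List ℕ, k <+: m.map (· + 1) → k ∈ shiftNodes ρ.nodes := by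
      intro m hm k hk
      rw [List.prefix_iff_eq_take, ← List.map_take] at hk
      exact ⟨_, ρ.prefix_closed hm (List.take_prefix _ _), Or.inl hk⟩
    rintro k n ⟨m, hm, rfl | rfl⟩ hk
    · exact key m hm k hk
    · rcases List.prefix_concat_iff.1 hk with rfl | hk
      · exact ⟨m, hm, Or.inr rfl⟩
      · exact key m hm k hk
  root_label := by
    have h := shiftLabel_map p t ρ.label []
    rw [ρ.root_label] at h
    exact h
  step := by
    rintro n ⟨m, hm, rfl | rfl⟩ q hq
    · rw [shiftLabel_map] at hq
      have hstep := ρ.step m hm q (fixLit_eq_inl hq)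
      -- A child `m ++ [d]` of `m` becomes the child in direction `d + 1`.
      have hchild : ∀ x, (∃ d, m ++ [d] ∈ ρ.nodes ∧ ρ.label (m ++ [d]) = x) →
          fixLit p (t m.length) x ∈ {x | ∃ d : ℕ, m.map (· + 1) ++ [d] ∈ shiftNodes ρ.nodes ∧
            shiftLabel p t ρ.label (m.map (· + 1) ++ [d]) = x} := by
        rintro x ⟨d, hd, rfl⟩
        refine ⟨d + 1, ⟨_, hd, Or.inl (by simp)⟩, ?_⟩
        have h := shiftLabel_map p t ρ.label (m ++ [d])
        simpa using h
      refine eval_of_eval_substP p (trueLit p (t m.length)).2 (A.tr q)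
        (S := {x | ∃ d, m ++ [d] ∈ ρ.nodes ∧ ρ.label (m ++ [d]) = x})
        (fun s hs => hchild _ hs) (fun l hl hs => ?_) ?_ ?_
      · have h := hchild _ hs
        rwa [fixLit, if_neg hl] at h
      · exact ⟨0, ⟨m, hm, Or.inr rfl⟩, shiftLabel_snoc p t ρ.label m⟩
      · cases (trueLit p (t m.length)).2
        · exact hstep.2
        · exact hstep.1
    · rw [shiftLabel_snoc] at hq
      cases hq
  lit_ok := by
    rintro n ⟨m, hm, rfl | rfl⟩ l hl
    · rw [shiftLabel_map] at hl
      rw [List.length_map]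
      cases hx : ρ.label m with
      | inl q => rw [hx] at hl; cases hl
      | inr l' =>
        have hok := ρ.lit_ok m hm l' hx
        rw [hx, fixLit] at hl
        obtain rfl := Sum.inr.inj hl
        split_ifs with h
        · exact litHolds_trueLit _ _
        · exact (litHolds_diff h).1 hok
    · rw [shiftLabel_snoc] at hl
      obtain rfl := Sum.inr.inj hl
      simpa using litHolds_trueLit p (t m.length)

/-- An infinite branch of the shifted tree is the shift of an infinite branch of the original. -/
lemma exists_branch_of_shiftNodes {N : Set (List ℕ)} {b : ℕ → ℕ}
    (hb : ∀ k : ℕ, (List.ofFn fun i : Fin k => b i) ∈ shiftNodes N) :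
    ∃ c : ℕ → ℕ, (∀ i, b i = c i + 1) ∧ ∀ k : ℕ, (List.ofFn fun i : Fin k => c i) ∈ N := by
  have hsucc : ∀ (m : List ℕ) (i k : ℕ), i < k →
      (List.ofFn fun i : Fin k => b i) = m.map (· + 1) → b i ≠ 0 := by
    intro m i k hik h h0
    have hmem : b i ∈ List.ofFn fun i : Fin k => b i := List.mem_ofFn.2 ⟨⟨i, hik⟩, rfl⟩
    rw [h, h0] at hmem
    simp at hmem
  -- A fresh leaf can only contribute the last entry of a prefix, and `b i` is not the last entry
  -- of the prefix of length `i + 2`.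
  have hpos : ∀ i, b i ≠ 0 := by
    intro i
    obtain ⟨m, -, h | h⟩ := hb (i + 2)
    · exact hsucc m i (i + 2) (by omega) h
    · rw [List.ofFn_succ_last] at h
      exact hsucc m i (i + 1) (by omega) (List.append_inj_left' h rfl)
  refine ⟨fun i => b i - 1, fun i => (Nat.succ_pred_eq_of_ne_zero (hpos i)).symm, fun k => ?_⟩
  obtain ⟨m, hm, h | h⟩ := hb k
  · have h' := congrArg (List.map (· - 1)) h
    simp only [List.map_ofFn, List.map_map, Function.comp_def, Nat.add_sub_cancel,
      List.map_id'] at h'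
    rwa [h']
  · have h0 : 0 ∈ List.ofFn fun i : Fin k => b i := by rw [h]; simp
    obtain ⟨i, hi⟩ := List.mem_ofFn.1 h0
    exact absurd hi (hpos i)

lemma shiftRun_accepting [DecidableEq V] {A : ABA V Q} {p : V} {t : Word V}
    {ρ : Run (A.sForall p) (projWord p t)} (hρ : ρ.Accepting) : (shiftRun ρ).Accepting := by
  intro b hb k
  obtain ⟨c, hc, hcN⟩ := exists_branch_of_shiftNodes hb
  obtain ⟨j, hj, q, hq, hlab⟩ := hρ c hcN k
  refine ⟨j, hj, q, hq, ?_⟩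
  have h := shiftLabel_map p t ρ.label (List.ofFn fun i : Fin j => c i)
  rw [hlab, List.map_ofFn] at h
  simp only [hc]
  exact h

/-- For every alternating Büchi automaton `A` and `p ∈ Σ`,
`L(∀°p.A) ⊆ L(∀p.A)`. -/
theorem sForall_subset_forallLang {V Q : Type} [Fintype V] [Fintype Q] [DecidableEq V]
    (A : ABA V Q) (p : V) :
    (A.sForall p).langWithout p ⊆ A.forallLang p := by
  rintro w ⟨⟨ρ, hρ⟩, hw⟩
  refine ⟨hw, ?_⟩
  rintro t rfl
  exact ⟨shiftRun ρ, shiftRun_accepting hρ⟩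

end ABAKC
end
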